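/- arXiv:2302.00596 — 2 statements merged into one kernel-verified Lean document; each statement's English description precedes it below -/
import Mathlib

section
/- For every integer n with 2 ≤ n ≤ N−1 and every sample point s = a + x, x ∈ {0, 1, …, N−1}, the weighted Racah polynomials satisfy the three-term recurrence in the degree: R̂_n(s) = Θ1·R̂_{n−1}(s) + Θ2·R̂_{n−2}(s), where Θ1 = (Θ11/Θ0)·√Θ12 and Θ2 = (Θ21/Θ0)·√(Θ12·Θ22), with Θ0 = n(α+β+n) / [(α+β+2n−1)(α+β+2n)], Θ11 = s(s+1) − (a² + b² + (a−β)² + (b+α)² − 2)/4 + (α+β+2n−2)(α+β+2n)/8 − (1/2)·(β²−α²)·[(b+α/2)² − (a−β/2)²] / [(α+β+2n−2)(α+β+2n)], Θ21 = −[(α+n−1)(β+n−1) / ((α+β+2n−2)(α+β+2n−1))]·[(a+b+(α−β)/2)² − (n−1+(α+β)/2)²]·[(b−a+(α+β)/2)² − (n−1+(α+β)/2)²], Θ12 = n(α+β+n)(α+β+2n+1) / [(α+n)(β+n)(α+β+2n−1)(a−b−α−β−n)(a−b+n)(a+b+α+n)(a+b−β−n)], and Θ22 = (n−1)(α+β+n−1)(α+β+2n−1)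 / [(α+n−1)(β+n−1)(α+β+2n−3)(a−b−α−β−n+1)(a−b+n−1)(a+b+α+n−1)(a+b−β−n+1)]. -/
open Finset

/-- Rising Pochhammer symbol `(x)_k = x (x+1) ⋯ (x+k-1)` for a real `x`. -/
noncomputable def pochR (x : ℝ) (k : ℕ) : ℝ := ∏ i ∈ Finset.range k, (x + i)

/-- The `n`-th Racah polynomial in Zhu's normalization. -/
noncomputable def racahR (a b α β : ℝ) (n : ℕ) (s : ℝ) : ℝ :=
  (1 / (Nat.factorial n : ℝ)) * pochR (a + b + α + 1) n * pochR (β + 1) n *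
    pochR (a - b + 1) n *
    ∑ k ∈ Finset.range (n + 1),
      pochR (-(n : ℝ)) k * pochR (a - s) k * pochR (a + s + 1) k *
          pochR (α + β + (n : ℝ) + 1) k /
        (pochR (β + 1) k * pochR (a + b + α + 1) k * pochR (a - b + 1) k *
          (Nat.factorial k : ℝ))

/-- The Racah weight function `ρ(s)`. -/
noncomputable def racahW (a b α β : ℝ) (s : ℝ) : ℝ :=
  Real.Gamma (a + s + 1) * Real.Gamma (b + s + α + 1) * Real.Gamma (b + α - s) *
      Real.Gamma (s - a + β + 1) /
    (Real.Gamma (b + s + 1) * Real.Gamma (b - s) * Real.Gamma (s - a + 1) *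
      Real.Gamma (a - β + s + 1))

/-- The squared norm `d_n²`. -/
noncomputable def racahD2 (a b α β : ℝ) (n : ℕ) : ℝ :=
  Real.Gamma (α + n + 1) * Real.Gamma (β + n + 1) * Real.Gamma (a + b + α + n + 1) *
      Real.Gamma (b - a + α + β + n + 1) /
    ((α + β + 2 * n + 1) * Real.Gamma (n + 1) * Real.Gamma (b - a - n) *
      Real.Gamma (α + β + n + 1) * Real.Gamma (a + b - n - β))

/-- The weighted Racah polynomial `R̂_n(s) = R_n(s) √(ρ(s)(2s+1)/d_n²)`. -/
noncomputable def racahHat (a b α β : ℝ) (n : ℕ) (s : ℝ) : ℝ :=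
  racahR a b α β n s * Real.sqrt (racahW a b α β s * (2 * s + 1) / racahD2 a b α β n)

/-- `σ(s) = (s−a)(s+b)(s+a−β)(b+α−s)`. -/
noncomputable def racahSigma (a b α β : ℝ) (s : ℝ) : ℝ :=
  (s - a) * (s + b) * (s + a - β) * (b + α - s)

/-- `τ(s)`. -/
noncomputable def racahTau (a b α β : ℝ) (s : ℝ) : ℝ :=
  a * (α + 1) * (a - β) + b * (b + α) * (β + 1) - (α + 1) * (β + 1) -
    s * (s + 1) * (α + β + 2)

/-- `λ_n = n (n+α+β+1)`. -/
noncomputable def racahLam (α β : ℝ) (n : ℕ) : ℝ := (n : ℝ) * ((n : ℝ) + α + β + 1)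

/-- `Θ0` in the three-term recurrence over the degree. -/
noncomputable def theta0 (α β : ℝ) (n : ℕ) : ℝ :=
  (n : ℝ) * (α + β + n) / ((α + β + 2 * n - 1) * (α + β + 2 * n))

/-- `Θ11` in the three-term recurrence over the degree. -/
noncomputable def theta11 (a b α β : ℝ) (n : ℕ) (s : ℝ) : ℝ :=
  s * (s + 1) - (a ^ 2 + b ^ 2 + (a - β) ^ 2 + (b + α) ^ 2 - 2) / 4 +
    (α + β + 2 * n - 2) * (α + β + 2 * n) / 8 -
    (1 / 2) * ((β ^ 2 - α ^ 2) * ((b + α / 2) ^ 2 - (a - β / 2) ^ 2) /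
      ((α + β + 2 * n - 2) * (α + β + 2 * n)))

/-- `Θ21` in the three-term recurrence over the degree. -/
noncomputable def theta21 (a b α β : ℝ) (n : ℕ) : ℝ :=
  -((α + n - 1) * (β + n - 1) / ((α + β + 2 * n - 2) * (α + β + 2 * n - 1))) *
    ((a + b + (α - β) / 2) ^ 2 - ((n : ℝ) - 1 + (α + β) / 2) ^ 2) *
    ((b - a + (α + β) / 2) ^ 2 - ((n : ℝ) - 1 + (α + β) / 2) ^ 2)

/-- `Θ12` in the three-term recurrence over the degree. -/
noncomputable def theta12 (a b α β : ℝ) (n : ℕ) : ℝ :=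
  (n : ℝ) * (α + β + n) * (α + β + 2 * n + 1) /
    ((α + n) * (β + n) * (α + β + 2 * n - 1) * (a - b - α - β - n) * (a - b + n) *
      (a + b + α + n) * (a + b - β - n))

/-- `Θ22` in the three-term recurrence over the degree. -/
noncomputable def theta22 (a b α β : ℝ) (n : ℕ) : ℝ :=
  ((n : ℝ) - 1) * (α + β + n - 1) * (α + β + 2 * n - 1) /
    ((α + n - 1) * (β + n - 1) * (α + β + 2 * n - 3) * (a - b - α - β - n + 1) *
      (a - b + n - 1) * (a + b + α + n - 1) * (a + b - β - n + 1))

/-!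
In the basis `(a − s)_k (a + s + 1)_k`, multiplication by `s (s + 1)` is bidiagonal, and the
coefficients of `R_n` are hypergeometric terms: moving the degree or the index by one multiplies
them by a rational function. Comparing coefficients, the recurrence for `R_n` becomes, after
division by a common coefficient, a single rational identity in the index. The weighted recurrence
is a rescaling of it, because `Θ12` and `Θ22` are the ratios of consecutive squared norms
`d_{n-1}² / d_n²` and `d_{n-2}² / d_{n-1}²`.
-/

theorem pochR_succ (x : ℝ) (k : ℕ) : pochR x (k + 1) = pochR x k * (x + k) :=
  prod_range_succ _ _

theorem pochR_succ_left (x : ℝ) (k : ℕ) : pochR x (k + 1) = x * pochR (x + 1) k := by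
  simp only [pochR, prod_range_succ', Nat.cast_add, Nat.cast_one, Nat.cast_zero, add_zero,
    mul_comm x, add_assoc, add_comm (1 : ℝ)]

theorem pochR_neg_natCast_of_lt {n k : ℕ} (h : n < k) : pochR (-(n : ℝ)) k = 0 :=
  prod_eq_zero (mem_range.2 h) (neg_add_cancel _)

/-- The cubic `Y(x) = (β + x)(a + b + α + x)(a − b + x)`. The products `Y(1) ⋯ Y(k)` collect the
three Pochhammer symbols `(β+1)_k (a+b+α+1)_k (a−b+1)_k` in Zhu's normalization. -/
noncomputable def racahCubic (a b α β x : ℝ) : ℝ := (β + x) * (a + b + α + x) * (a - b + x)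

/-- The coefficient of `R_n` at the `k`-th basis function `racahBasis a s k`; it is `0` for
`k > n`. -/
noncomputable def racahCoeff (a b α β : ℝ) (n k : ℕ) : ℝ :=
  (∏ i ∈ range n, racahCubic a b α β (i + 1)) / n.factorial *
      (pochR (-(n : ℝ)) k * pochR (α + β + n + 1) k) /
    ((∏ i ∈ range k, racahCubic a b α β (i + 1)) * k.factorial)

/-- The basis `(a − s)_k (a + s + 1)_k` of the polynomials in `s (s + 1)`. -/
noncomputable def racahBasis (a s : ℝ) (k : ℕ) : ℝ := pochR (a - s) k * pochR (a + s + 1) k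

section Coefficients

variable (a b α β s : ℝ) (n k : ℕ)

theorem prod_racahCubic :
    ∏ i ∈ range k, racahCubic a b α β (i + 1) =
      pochR (β + 1) k * pochR (a + b + α + 1) k * pochR (a - b + 1) k := by
  simp only [pochR, racahCubic, ← prod_mul_distrib]
  exact prod_congr rfl fun i _ => by ring

theorem racahBasis_succ :
    racahBasis a s (k + 1) = ((a + k) * (a + k + 1) - s * (s + 1)) * racahBasis a s k := by
  simp only [racahBasis, pochR_succ]
  ring

theorem racahCoeff_of_lt {n k : ℕ} (h : n < k) : racahCoeff a b α β n k = 0 := by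
  simp only [racahCoeff, pochR_neg_natCast_of_lt h, zero_mul, mul_zero, zero_div]

theorem racahR_eq_sum_range_succ :
    racahR a b α β n s = ∑ k ∈ range (n + 1), racahCoeff a b α β n k * racahBasis a s k := by
  simp only [racahR, mul_sum, racahCoeff, racahBasis, prod_racahCubic]
  exact sum_congr rfl fun k _ => by ring

theorem racahR_eq_sum {n M : ℕ} (h : n < M) :
    racahR a b α β n s = ∑ k ∈ range M, racahCoeff a b α β n k * racahBasis a s k := by
  rw [racahR_eq_sum_range_succ]
  refine sum_subset (range_subset_range.2 h) fun k _ hk => ?_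
  have hnk : n < k := by simpa only [mem_range, not_lt, Nat.add_one_le_iff] using hk
  rw [racahCoeff_of_lt a b α β hnk, zero_mul]

theorem mul_racahR_eq_sum {n M : ℕ} (h : n < M) :
    s * (s + 1) * racahR a b α β n s =
      ∑ k ∈ range (M + 1), (a + k) * (a + k + 1) * (racahCoeff a b α β n k * racahBasis a s k) -
        ∑ k ∈ range M, racahCoeff a b α β n k * racahBasis a s (k + 1) := by
  rw [racahR_eq_sum a b α β s h, sum_range_succ, racahCoeff_of_lt a b α β h, zero_mul, mul_zero,
    add_zero, mul_sum, ← sum_sub_distrib]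
  refine sum_congr rfl fun k _ => ?_
  rw [racahBasis_succ]
  ring

theorem racahCoeff_degree_succ_zero :
    (n + 1) * racahCoeff a b α β (n + 1) 0 =
      racahCubic a b α β (n + 1) * racahCoeff a b α β n 0 := by
  simp only [racahCoeff, prod_range_succ _ n, Nat.factorial_succ]
  push_cast
  field_simp
  simp [pochR]

theorem racahCoeff_degree_succ :
    (n + 1 - k) * (n + α + β + 1) * racahCoeff a b α β (n + 1) k =
      racahCubic a b α β (n + 1) * (n + α + β + 1 + k) * racahCoeff a b α β n k := by
  have shift (x : ℝ) : x * pochR (x + 1) k = pochR x k * (x + k) := by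
    rw [← pochR_succ_left, pochR_succ]
  have hneg := shift (-(n + 1))
  have hpos := shift (α + β + n + 1)
  rw [show -((n : ℝ) + 1) + 1 = -n by ring] at hneg
  simp only [racahCoeff, prod_range_succ _ n, Nat.factorial_succ]
  push_cast
  rw [show α + β + ((n : ℝ) + 1) + 1 = α + β + n + 1 + 1 by ring]
  field_simp
  congr 1
  linear_combination (∏ x ∈ range n, racahCubic a b α β (x + 1)) * racahCubic a b α β (n + 1) *
    ((n + 1) * pochR (-n) k * hpos +
      (n + α + β + 1) * pochR (α + β + n + 1 + 1) k * hneg)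

theorem racahCoeff_index_succ (hk : racahCubic a b α β (k + 1) ≠ 0) :
    (k + 1) * racahCubic a b α β (k + 1) * racahCoeff a b α β n (k + 1) =
      (k - n) * (n + α + β + 1 + k) * racahCoeff a b α β n k := by
  simp only [racahCoeff, prod_range_succ _ k, pochR_succ, Nat.factorial_succ]
  push_cast
  field_simp
  ring

theorem racahCoeff_degree_succ_index_succ (hk : racahCubic a b α β (k + 1) ≠ 0) :
    (n + α + β + 1) *
        ((k + 1) * racahCubic a b α β (k + 1) * racahCoeff a b α β (n + 1) (k + 1)) =
      -(racahCubic a b α β (n + 1) * (n + α + β + 1 + k) * (n + α + β + 2 + k) *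
        racahCoeff a b α β n k) := by
  have index := racahCoeff_index_succ a b α β (n + 1) k hk
  push_cast at index
  linear_combination (n + α + β + 1) * index -
    (n + α + β + 2 + k) * racahCoeff_degree_succ a b α β n k

theorem racahCoeff_index_succ_degree_pred (hk : racahCubic a b α β (k + 1) ≠ 0) :
    racahCubic a b α β (n + 1) *
        ((k + 1) * racahCubic a b α β (k + 1) * racahCoeff a b α β n (k + 1)) =
      (k - n) * (n + 1 - k) * (n + α + β + 1) * racahCoeff a b α β (n + 1) k := by
  linear_combination racahCubic a b α β (n + 1) * racahCoeff_index_succ a b α β n k hk -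
    (k - n) * racahCoeff_degree_succ a b α β n k

end Coefficients

theorem theta21_eq (a b α β : ℝ) (m : ℕ) :
    theta21 a b α β (m + 2) =
      racahCubic a b α β (m + 1) * racahCubic a b α β (-(m + 1 + α + β)) /
        ((α + β + 2 * m + 2) * (α + β + 2 * m + 3)) := by
  unfold theta21 racahCubic
  push_cast
  ring

theorem theta0_eq (α β : ℝ) (m : ℕ) :
    theta0 α β (m + 2) =
      (m + 2) / ((α + β + 2 * m + 3) * (α + β + 2 * m + 4)) * (m + 2 + α + β) := by
  simp only [theta0]
  push_cast
  ring

theorem theta11_eq_add (a b α β : ℝ) (n : ℕ) (s : ℝ) :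
    theta11 a b α β n s = s * (s + 1) + theta11 a b α β n 0 := by
  simp only [theta11]
  ring

/-- The two fractions are exchanged, up to sign, by the symmetry `n ↦ -n - α - β - 1` of the degree
`n = m + 1`; hence the argument `-(m + 1 + α + β)` of the second cubic. -/
theorem theta11_zero_eq (a b α β : ℝ) (m : ℕ) (h₁ : α + β + 2 * m + 2 ≠ 0)
    (h₂ : α + β + 2 * m + 3 ≠ 0) (h₃ : α + β + 2 * m + 4 ≠ 0) :
    theta11 a b α β (m + 2) 0 =
      (m + 2 + α + β) * racahCubic a b α β (m + 2) /
          ((α + β + 2 * m + 3) * (α + β + 2 * m + 4)) -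
        (m + 1) * racahCubic a b α β (-(m + 1 + α + β)) /
          ((α + β + 2 * m + 2) * (α + β + 2 * m + 3)) - a * (a + 1) := by
  -- In terms of `w` the denominators are `w - 1`, `w` and `w + 1`.
  obtain ⟨w, hw⟩ : ∃ w, w = α + β + 2 * m + 3 := ⟨_, rfl⟩
  obtain rfl : α = w - β - 2 * m - 3 := by linear_combination -hw
  rw [← hw] at h₂ ⊢
  rw [show w - β - 2 * m - 3 + β + 2 * m + 2 = w - 1 by ring] at h₁ ⊢
  rw [show w - β - 2 * m - 3 + β + 2 * m + 4 = w + 1 by ring] at h₃ ⊢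
  unfold theta11 racahCubic
  push_cast
  rw [show w - β - 2 * m - 3 + β + 2 * (m + 2) - 2 = w - 1 by ring,
    show w - β - 2 * m - 3 + β + 2 * (m + 2) = w + 1 by ring]
  field_simp
  ring

theorem theta11_zero_add_mul_eq (a b α β t : ℝ) (m : ℕ) (h₁ : α + β + 2 * m + 2 ≠ 0)
    (h₂ : α + β + 2 * m + 3 ≠ 0) (h₃ : α + β + 2 * m + 4 ≠ 0) :
    (theta11 a b α β (m + 2) 0 + (a + t) * (a + t + 1)) * (t - (m + 2)) * (m + 1 + α + β + t) =
      t * racahCubic a b α β t -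
        (m + 2) / ((α + β + 2 * m + 3) * (α + β + 2 * m + 4)) * racahCubic a b α β (m + 2) *
          (m + 1 + α + β + t) * (m + 2 + α + β + t) -
        racahCubic a b α β (-(m + 1 + α + β)) / ((α + β + 2 * m + 2) * (α + β + 2 * m + 3)) *
          (m + 1 - t) * (t - (m + 2)) * (m + 1 + α + β) := by
  rw [theta11_zero_eq a b α β m h₁ h₂ h₃]
  obtain ⟨w, hw⟩ : ∃ w, w = α + β + 2 * m + 3 := ⟨_, rfl⟩
  obtain rfl : α = w - β - 2 * m - 3 := by linear_combination -hw
  rw [← hw] at h₂ ⊢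
  rw [show w - β - 2 * m - 3 + β + 2 * m + 2 = w - 1 by ring] at h₁ ⊢
  rw [show w - β - 2 * m - 3 + β + 2 * m + 4 = w + 1 by ring] at h₃ ⊢
  unfold racahCubic
  field_simp
  ring

section Recurrence

variable {a b α β : ℝ} {m : ℕ}

theorem theta0_mul_racahCoeff_zero (h₁ : α + β + 2 * m + 2 ≠ 0)
    (h₂ : α + β + 2 * m + 3 ≠ 0) (h₃ : α + β + 2 * m + 4 ≠ 0) :
    theta0 α β (m + 2) * racahCoeff a b α β (m + 2) 0 =
      (theta11 a b α β (m + 2) 0 + a * (a + 1)) * racahCoeff a b α β (m + 1) 0 +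
        theta21 a b α β (m + 2) * racahCoeff a b α β m 0 := by
  have top := racahCoeff_degree_succ_zero a b α β (m + 1)
  have bottom := racahCoeff_degree_succ_zero a b α β m
  push_cast at top
  rw [show (m : ℝ) + 1 + 1 = m + 2 by ring] at top
  rw [theta0_eq, theta21_eq, theta11_zero_eq a b α β m h₁ h₂ h₃]
  linear_combination
    (m + 2 + α + β) / ((α + β + 2 * m + 3) * (α + β + 2 * m + 4)) * top +
      racahCubic a b α β (-(m + 1 + α + β)) / ((α + β + 2 * m + 2) * (α + β + 2 * m + 3)) * bottom

theorem theta0_mul_racahCoeff_succ (h₁ : α + β + 2 * m + 2 ≠ 0)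
    (h₂ : α + β + 2 * m + 3 ≠ 0) (h₃ : α + β + 2 * m + 4 ≠ 0) {k : ℕ}
    (hk : racahCubic a b α β (k + 1) ≠ 0) :
    theta0 α β (m + 2) * racahCoeff a b α β (m + 2) (k + 1) =
      (theta11 a b α β (m + 2) 0 + (a + (k + 1)) * (a + (k + 1) + 1)) *
          racahCoeff a b α β (m + 1) (k + 1) -
        racahCoeff a b α β (m + 1) k +
        theta21 a b α β (m + 2) * racahCoeff a b α β m (k + 1) := by
  have top := racahCoeff_degree_succ_index_succ a b α β (m + 1) k hk
  have middle := racahCoeff_index_succ a b α β (m + 1) k hk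
  have bottom := racahCoeff_index_succ_degree_pred a b α β m k hk
  have identity := theta11_zero_add_mul_eq a b α β (k + 1) m h₁ h₂ h₃
  push_cast at top middle
  rw [show (m : ℝ) + 1 + 1 = m + 2 by ring] at top
  rw [theta0_eq, theta21_eq]
  refine mul_left_cancel₀ (mul_ne_zero k.cast_add_one_ne_zero hk) ?_
  linear_combination
    (m + 2) / ((α + β + 2 * m + 3) * (α + β + 2 * m + 4)) * top -
      (theta11 a b α β (m + 2) 0 + (a + (k + 1)) * (a + (k + 1) + 1)) * middle -
      racahCubic a b α β (-(m + 1 + α + β)) /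
        ((α + β + 2 * m + 2) * (α + β + 2 * m + 3)) * bottom -
      racahCoeff a b α β (m + 1) k * identity

theorem theta0_mul_racahR (h₁ : α + β + 2 * m + 2 ≠ 0)
    (h₂ : α + β + 2 * m + 3 ≠ 0) (h₃ : α + β + 2 * m + 4 ≠ 0)
    (hY : ∀ k < m + 2, racahCubic a b α β (k + 1) ≠ 0) (s : ℝ) :
    theta0 α β (m + 2) * racahR a b α β (m + 2) s =
      theta11 a b α β (m + 2) s * racahR a b α β (m + 1) s +
        theta21 a b α β (m + 2) * racahR a b α β m s := by
  rw [theta11_eq_add, add_mul, mul_racahR_eq_sum a b α β s (by lia : m + 1 < m + 2),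
    racahR_eq_sum_range_succ, racahR_eq_sum a b α β s (by lia : m + 1 < m + 3),
    racahR_eq_sum a b α β s (by lia : m < m + 3)]
  set c := racahCoeff a b α β
  set φ := racahBasis a s
  have higher_terms :
      theta0 α β (m + 2) * ∑ k ∈ range (m + 2), c (m + 2) (k + 1) * φ (k + 1) =
        ∑ k ∈ range (m + 2),
            (a + (k + 1)) * (a + (k + 1) + 1) * (c (m + 1) (k + 1) * φ (k + 1)) -
          ∑ k ∈ range (m + 2), c (m + 1) k * φ (k + 1) +
          theta11 a b α β (m + 2) 0 * ∑ k ∈ range (m + 2), c (m + 1) (k + 1) * φ (k + 1) +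
          theta21 a b α β (m + 2) * ∑ k ∈ range (m + 2), c m (k + 1) * φ (k + 1) := by
    simp only [mul_sum, ← sum_add_distrib, ← sum_sub_distrib]
    refine sum_congr rfl fun k hk => ?_
    linear_combination
      φ (k + 1) * theta0_mul_racahCoeff_succ h₁ h₂ h₃ (hY k (mem_range.1 hk))
  simp only [sum_range_succ' _ (m + 2)]
  push_cast
  linear_combination higher_terms + φ 0 * theta0_mul_racahCoeff_zero h₁ h₂ h₃

end Recurrence

section Norm

variable {a b α β : ℝ} {j : ℕ}

theorem add_mul_Gamma_pos {x : ℝ} (hx : -2 < x) (hj : x + 2 * j + 1 ≠ 0) :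
    0 < (x + 2 * j + 1) * Real.Gamma (x + j + 1) := by
  rcases j.eq_zero_or_pos with rfl | hpos
  · -- Both factors may be negative here; their product is `Γ (x + 2)`.
    simp only [Nat.cast_zero, mul_zero, add_zero] at hj ⊢
    rw [← Real.Gamma_add_one hj]
    exact Real.Gamma_pos_of_pos (by linarith)
  · have : (1 : ℝ) ≤ j := by exact_mod_cast hpos
    exact mul_pos (by linarith) (Real.Gamma_pos_of_pos (by linarith))

theorem racahD2_pos (hα : -1 < α) (hβ : -1 < β) (hj : α + β + 2 * j + 1 ≠ 0)
    (hba : (j : ℝ) + 1 < b - a) (hab : j + 1 + β < a + b) : 0 < racahD2 a b α β j := by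
  have hG := add_mul_Gamma_pos (by linarith) hj
  have h₁ : 0 < α + j + 1 := by linarith
  have h₂ : 0 < β + j + 1 := by linarith
  have h₃ : 0 < a + b + α + j + 1 := by linarith
  have h₄ : 0 < b - a + α + β + j + 1 := by linarith
  have h₅ : 0 < b - a - j := by linarith
  have h₆ : 0 < a + b - j - β := by linarith
  unfold racahD2
  rw [show ∀ u v w x y : ℝ, u * v * w * x * y = u * x * v * w * y by intros; ring]
  positivity

theorem Gamma_eq_mul_of_eq_add_one {x y : ℝ} (hy : y ≠ 0) (h : x = y + 1) :
    Real.Gamma x = y * Real.Gamma y := by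
  rw [h, Real.Gamma_add_one hy]

theorem theta12_succ (a b α β : ℝ) (j : ℕ) :
    theta12 a b α β (j + 1) =
      (j + 1) * (α + β + j + 1) * (α + β + 2 * j + 3) /
        ((α + j + 1) * (β + j + 1) * (α + β + 2 * j + 1) * (b - a + α + β + j + 1) *
          (b - a - (j + 1)) * (a + b + α + j + 1) * (a + b - (j + 1) - β)) := by
  unfold theta12
  push_cast
  congr 1 <;> ring

theorem racahD2_succ (h₁ : α + j + 1 ≠ 0) (h₂ : β + j + 1 ≠ 0) (h₃ : a + b + α + j + 1 ≠ 0)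
    (h₄ : b - a + α + β + j + 1 ≠ 0) (h₅ : b - a - (j + 1) ≠ 0) (h₆ : a + b - (j + 1) - β ≠ 0)
    (h₇ : α + β + j + 1 ≠ 0) (h₈ : α + β + 2 * j + 1 ≠ 0) :
    racahD2 a b α β (j + 1) = racahD2 a b α β j / theta12 a b α β (j + 1) := by
  rw [theta12_succ]
  unfold racahD2
  push_cast
  rw [Gamma_eq_mul_of_eq_add_one h₁ (by ring : α + ((j : ℝ) + 1) + 1 = _),
    Gamma_eq_mul_of_eq_add_one h₂ (by ring : β + ((j : ℝ) + 1) + 1 = _),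
    Gamma_eq_mul_of_eq_add_one h₃ (by ring : a + b + α + ((j : ℝ) + 1) + 1 = _),
    Gamma_eq_mul_of_eq_add_one h₄ (by ring : b - a + α + β + ((j : ℝ) + 1) + 1 = _),
    Gamma_eq_mul_of_eq_add_one h₅ (by ring : b - a - (j : ℝ) = _),
    Gamma_eq_mul_of_eq_add_one h₆ (by ring : a + b - (j : ℝ) - β = _),
    Gamma_eq_mul_of_eq_add_one h₇ (by ring : α + β + ((j : ℝ) + 1) + 1 = _),
    Real.Gamma_add_one j.cast_add_one_ne_zero,
    show α + β + 2 * ((j : ℝ) + 1) + 1 = α + β + 2 * j + 3 by ring]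
  generalize α + j + 1 = x₁ at h₁ ⊢
  generalize β + j + 1 = x₂ at h₂ ⊢
  generalize a + b + α + j + 1 = x₃ at h₃ ⊢
  generalize b - a + α + β + j + 1 = x₄ at h₄ ⊢
  generalize b - a - (j + 1) = x₅ at h₅ ⊢
  generalize a + b - (j + 1) - β = x₆ at h₆ ⊢
  generalize α + β + j + 1 = x₇ at h₇ ⊢
  generalize α + β + 2 * j + 1 = x₈ at h₈ ⊢
  field_simp

theorem theta12_eq_div (hα : -1 < α) (hβ : -1 < β) (hj : α + β + 2 * j + 1 ≠ 0)
    (hba : (j : ℝ) + 1 < b - a) (hab : j + 1 + β < a + b) :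
    theta12 a b α β (j + 1) = racahD2 a b α β j / racahD2 a b α β (j + 1) := by
  have h₇ : α + β + j + 1 ≠ 0 := fun h => by
    simpa [h] using add_mul_Gamma_pos (by linarith) hj
  rw [racahD2_succ (by linarith) (by linarith) (by linarith) (by linarith) (by linarith)
    (by linarith) h₇ hj, div_div_cancel₀ (racahD2_pos hα hβ hj hba hab).ne']

theorem theta22_eq_theta12 (m : ℕ) : theta22 a b α β (m + 2) = theta12 a b α β (m + 1) := by
  unfold theta22 theta12
  push_cast
  congr 1 <;> ring

theorem sqrt_div_mul_racahHat {s D : ℝ} (hW : 0 ≤ racahW a b α β s * (2 * s + 1))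
    (hD : 0 < racahD2 a b α β j) :
    √(racahD2 a b α β j / D) * racahHat a b α β j s =
      racahR a b α β j s * √(racahW a b α β s * (2 * s + 1) / D) := by
  rw [racahHat, mul_left_comm, ← Real.sqrt_mul' _ (by positivity), mul_comm (_ / D),
    div_mul_div_cancel₀ hD.ne']

end Norm

theorem theta0_ne_zero {α β : ℝ} (hα : -1 < α) (hβ : -1 < β) (m : ℕ) :
    theta0 α β (m + 2) ≠ 0 := by
  have h₁ : 0 < (m : ℝ) + 2 + α + β := by linarith
  have h₂ : 0 < α + β + 2 * m + 3 := by linarith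
  have h₃ : 0 < α + β + 2 * m + 4 := by linarith
  rw [theta0_eq]
  positivity

theorem racahCubic_ne_zero {a b α β x : ℝ} (hβ : 0 < β + x) (hab : 0 < a + b + α + x)
    (hba : x < b - a) : racahCubic a b α β x ≠ 0 :=
  mul_ne_zero (mul_ne_zero hβ.ne' hab.ne') (by linarith)

theorem racahW_mul_pos {a b α β s : ℝ} (ha : -(1 / 2) < a) (hα : -1 < α) (hβ₁ : -1 < β)
    (hβ₂ : β < 2 * a + 1) (has : a ≤ s) (hsb : s ≤ b - 1) :
    0 < racahW a b α β s * (2 * s + 1) := by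
  have Gamma_pos {x : ℝ} (hx : 0 < x) : 0 < Real.Gamma x := Real.Gamma_pos_of_pos hx
  refine mul_pos (div_pos ?_ ?_) (by linarith)
  · exact mul_pos (mul_pos (mul_pos (Gamma_pos (by linarith)) (Gamma_pos (by linarith)))
      (Gamma_pos (by linarith))) (Gamma_pos (by linarith))
  · exact mul_pos (mul_pos (mul_pos (Gamma_pos (by linarith)) (Gamma_pos (by linarith)))
      (Gamma_pos (by linarith))) (Gamma_pos (by linarith))

/-- Positivity of the weight keeps the square roots, and the values of `Γ` at its poles, away from
their junk value `0`. -/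
theorem racah_three_term_recurrence_degree_general {a b α β s : ℝ} {n : ℕ} (hα : -1 < α)
    (hβ : -1 < β) (hn2 : 2 ≤ n) (hba : n < b - a) (hab : n + β < a + b)
    (hden : α + β + 2 * n - 3 ≠ 0) (hW : 0 < racahW a b α β s * (2 * s + 1)) :
    racahHat a b α β n s =
      (theta11 a b α β n s / theta0 α β n) * √(theta12 a b α β n) * racahHat a b α β (n - 1) s +
        (theta21 a b α β n / theta0 α β n) * √(theta12 a b α β n * theta22 a b α β n) *
          racahHat a b α β (n - 2) s := by
  obtain ⟨m, rfl⟩ : ∃ m, n = m + 2 := ⟨n - 2, by lia⟩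
  push_cast at hba hab hden
  have hden' : α + β + 2 * m + 1 ≠ 0 := fun h => hden (by linarith)
  have norm₀ : 0 < racahD2 a b α β m := racahD2_pos hα hβ hden' (by linarith) (by linarith)
  have norm₁ : 0 < racahD2 a b α β (m + 1) := by
    apply racahD2_pos hα hβ <;> push_cast <;> linarith
  have ratio₁ : theta12 a b α β (m + 2) = racahD2 a b α β (m + 1) / racahD2 a b α β (m + 2) := by
    apply theta12_eq_div hα hβ <;> push_cast <;> linarith
  have ratio₂ : theta12 a b α β (m + 2) * theta22 a b α β (m + 2) =
      racahD2 a b α β m / racahD2 a b α β (m + 2) := by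
    rw [ratio₁, theta22_eq_theta12, theta12_eq_div hα hβ hden' (by linarith) (by linarith),
      mul_comm, div_mul_div_cancel₀ norm₁.ne']
  have cubic_ne (k : ℕ) (hk : k < m + 2) : racahCubic a b α β (k + 1) ≠ 0 := by
    have hk₁ : (k : ℝ) + 1 ≤ m + 2 := by exact_mod_cast hk
    exact racahCubic_ne_zero (by linarith) (by linarith) (by linarith)
  have recurrence := theta0_mul_racahR (by linarith) (by linarith) (by linarith) cubic_ne s
  have theta0_ne := theta0_ne_zero hα hβ m
  rw [Nat.add_sub_cancel, show m + 2 - 1 = m + 1 from rfl, ratio₂, ratio₁, mul_assoc, mul_assoc,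
    sqrt_div_mul_racahHat hW.le norm₁, sqrt_div_mul_racahHat hW.le norm₀, racahHat]
  field_simp
  linear_combination √(racahW a b α β s * (2 * s + 1) / racahD2 a b α β (m + 2)) * recurrence

theorem racah_three_term_recurrence_degree
    (N : ℕ) (hN : 2 ≤ N) (a α β b : ℝ) (ha : -(1/2) < a) (hα : -1 < α)
    (hβ1 : -1 < β) (hβ2 : β < 2 * a + 1) (hb : b = a + N)
    (n : ℕ) (hn2 : 2 ≤ n) (hn : n ≤ N - 1) (x : ℕ) (hx : x ≤ N - 1)
    (hden0 : (α + β + 2 * n - 1) * (α + β + 2 * n) ≠ 0)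
    (hden11 : (α + β + 2 * n - 2) * (α + β + 2 * n) ≠ 0)
    (hden21 : (α + β + 2 * n - 2) * (α + β + 2 * n - 1) ≠ 0)
    (hden12 : (α + n) * (β + n) * (α + β + 2 * n - 1) * (a - b - α - β - n) *
        (a - b + n) * (a + b + α + n) * (a + b - β - n) ≠ 0)
    (hden22 : (α + n - 1) * (β + n - 1) * (α + β + 2 * n - 3) *
        (a - b - α - β - n + 1) * (a - b + n - 1) * (a + b + α + n - 1) *
        (a + b - β - n + 1) ≠ 0)
    (hth0 : theta0 α β n ≠ 0) :
    racahHat a b α β n (a + x) =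
      (theta11 a b α β n (a + x) / theta0 α β n) * Real.sqrt (theta12 a b α β n) *
          racahHat a b α β (n - 1) (a + x) +
        (theta21 a b α β n / theta0 α β n) *
          Real.sqrt (theta12 a b α β n * theta22 a b α β n) *
          racahHat a b α β (n - 2) (a + x) := by
  have hN' : (n : ℝ) + 1 ≤ N := by exact_mod_cast (by lia : n + 1 ≤ N)
  have hx' : (x : ℝ) + 1 ≤ N := by exact_mod_cast (by lia : x + 1 ≤ N)
  have hden : α + β + 2 * n - 3 ≠ 0 :=
    right_ne_zero_of_mul <| left_ne_zero_of_mul <| left_ne_zero_of_mul <|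
      left_ne_zero_of_mul <| left_ne_zero_of_mul hden22
  exact racah_three_term_recurrence_degree_general hα hβ1 hn2 (by linarith) (by linarith) hden
    (racahW_mul_pos ha hα hβ1 hβ2 (by linarith) (by linarith))
end

section
/- In the special case a = α = β = 0 (so b = N), for all integers n, s with 0 ≤ n ≤ N−1 and 0 ≤ s ≤ N−1, the weighted Racah polynomial has the closed form R̂_n(s) = ((−1)^n / N)·√((2n+1)(2s+1))·Σ_{k=0}^{n} [(−n)_k·(−s)_k·(s+1)_k·(n+1)_k] / [(1)_k·(N+1)_k·(1−N)_k·k!]. -/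
open Finset

/-!
When `α = β = 0` the Gamma factors of the weight cancel in pairs, so `ρ = 1`. If moreover `a = 0`,
the two Gamma quotients in `d_n²` coincide, which makes `(2n+1) d_n²` the square of
`Γ(b+n+1) / Γ(b-n) = (-1)^n b (b+1)_n (1-b)_n`. This is `(-1)^n b` times the factor in front of
the hypergeometric sum in `R_n`, so normalization leaves only `(-1)^n / b`.
-/

theorem pochR_eq_eval_ascPochhammer (x : ℝ) (k : ℕ) :
    pochR x k = (ascPochhammer ℝ k).eval x := by
  induction k with
  | zero => simp [pochR]
  | succ k ih => rw [ascPochhammer_succ_eval, ← ih, pochR, pochR, prod_range_succ]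

theorem pochR_one_left (n : ℕ) : pochR 1 n = (n.factorial : ℝ) := by
  rw [pochR_eq_eval_ascPochhammer, ascPochhammer_eval_one]

theorem pochR_one_sub (x : ℝ) (n : ℕ) : pochR (1 - x) n = (-1) ^ n * pochR (x - n) n := by
  rw [pochR_eq_eval_ascPochhammer, pochR_eq_eval_ascPochhammer, ← neg_sub x 1,
    ascPochhammer_eval_neg_eq_descPochhammer, descPochhammer_eval_eq_ascPochhammer,
    sub_sub, add_comm 1, ← sub_sub, sub_add_cancel]

theorem Gamma_add_nat_eq_pochR_mul_Gamma {x : ℝ} (hx : ∀ m : ℕ, x ≠ -m) (n : ℕ) :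
    Real.Gamma (x + n) = pochR x n * Real.Gamma x := by
  have hquot : Complex.Gamma (x + n) / Complex.Gamma x = (ascPochhammer ℂ n).eval (x : ℂ) :=
    Complex.Gamma_add_nat_div_Gamma_eq x fun m ↦ by exact_mod_cast hx m
  have heval : (ascPochhammer ℂ n).eval (x : ℂ) = (pochR x n : ℂ) := by
    rw [pochR_eq_eval_ascPochhammer, ascPochhammer_eval₂ Complex.ofRealHom]
    exact Polynomial.eval₂_at_apply Complex.ofRealHom x
  rw [← div_eq_iff (Real.Gamma_ne_zero hx)]
  rw [heval, ← Complex.ofReal_natCast, ← Complex.ofReal_add, Complex.Gamma_ofReal,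
    Complex.Gamma_ofReal] at hquot
  exact_mod_cast hquot

theorem pochR_add_one_mul_pochR_one_sub {x : ℝ} {n : ℕ} (hx : ∀ m : ℕ, x - n ≠ -m) :
    pochR (x + 1) n * pochR (1 - x) n =
      (-1) ^ n / x * (Real.Gamma (x + n + 1) / Real.Gamma (x - n)) := by
  have hx₀ : x ≠ 0 := fun h ↦ hx n (by simp [h])
  have hx₁ (m : ℕ) : x + 1 ≠ -m := fun h ↦ hx (m + 1 + n) (by push_cast; linarith)
  have hdown : Real.Gamma x = pochR (x - n) n * Real.Gamma (x - n) := by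
    simpa using Gamma_add_nat_eq_pochR_mul_Gamma hx n
  have hup : Real.Gamma (x + n + 1) = pochR (x + 1) n * (x * Real.Gamma x) := by
    rw [add_right_comm, Gamma_add_nat_eq_pochR_mul_Gamma hx₁, Real.Gamma_add_one hx₀]
  have hΓ : Real.Gamma (x - n) ≠ 0 := Real.Gamma_ne_zero hx
  rw [hup, hdown, pochR_one_sub]
  field_simp

theorem Gamma_add_add_one_div_Gamma_sub_pos {x : ℝ} {n : ℕ} (hn : n < x) :
    0 < Real.Gamma (x + n + 1) / Real.Gamma (x - n) := by
  have hx : 0 < x := n.cast_nonneg.trans_lt hn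
  exact div_pos (Real.Gamma_pos_of_pos (by positivity)) (Real.Gamma_pos_of_pos (sub_pos.mpr hn))

/-- The terminating hypergeometric sum
`₄F₃(-n, a - s, a + s + 1, α + β + n + 1; β + 1, a + b + α + 1, a - b + 1; 1)`
to which `racahR` is proportional. -/
noncomputable def racahSum (a b α β : ℝ) (n : ℕ) (s : ℝ) : ℝ :=
  ∑ k ∈ range (n + 1),
    pochR (-(n : ℝ)) k * pochR (a - s) k * pochR (a + s + 1) k * pochR (α + β + (n : ℝ) + 1) k /
      (pochR (β + 1) k * pochR (a + b + α + 1) k * pochR (a - b + 1) k * (k.factorial : ℝ))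

theorem racahR_beta_zero (a b α : ℝ) (n : ℕ) (s : ℝ) :
    racahR a b α 0 n s =
      pochR (a + b + α + 1) n * pochR (a - b + 1) n * racahSum a b α 0 n s := by
  have hn : (n.factorial : ℝ) ≠ 0 := by positivity
  rw [racahR, ← racahSum, zero_add, pochR_one_left]
  field_simp

theorem racahW_alpha_beta_zero {a b s : ℝ} (ha : |a| < s + 1) (hbs : -b < s + 1) (hsb : s < b) :
    racahW a b 0 0 s = 1 := by
  obtain ⟨ha₁, ha₂⟩ := abs_lt.mp ha
  have h₁ : Real.Gamma (a + s + 1) ≠ 0 := (Real.Gamma_pos_of_pos (by linarith)).ne'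
  have h₂ : Real.Gamma (b + s + 1) ≠ 0 := (Real.Gamma_pos_of_pos (by linarith)).ne'
  have h₃ : Real.Gamma (b - s) ≠ 0 := (Real.Gamma_pos_of_pos (by linarith)).ne'
  have h₄ : Real.Gamma (s - a + 1) ≠ 0 := (Real.Gamma_pos_of_pos (by linarith)).ne'
  simp only [racahW, add_zero, sub_zero]
  field_simp

theorem racahD2_alpha_beta_zero (a b : ℝ) (n : ℕ) :
    racahD2 a b 0 0 n =
      Real.Gamma (a + b + n + 1) / Real.Gamma (a + b - n) *
        (Real.Gamma (b - a + n + 1) / Real.Gamma (b - a - n)) / (2 * n + 1) := by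
  have hn : Real.Gamma (n + 1) ≠ 0 := (Real.Gamma_pos_of_pos (by positivity)).ne'
  simp only [racahD2, zero_add, add_zero, sub_zero]
  field_simp

theorem sqrt_racahW_mul_div_racahD2_zero {b s : ℝ} {n : ℕ} (hn : n < b) (hs : -(1 / 2) ≤ s)
    (hsb : s < b) :
    √(racahW 0 b 0 0 s * (2 * s + 1) / racahD2 0 b 0 0 n) =
      √((2 * n + 1) * (2 * s + 1)) / (Real.Gamma (b + n + 1) / Real.Gamma (b - n)) := by
  have hW : racahW 0 b 0 0 s = 1 :=
    racahW_alpha_beta_zero (by rw [abs_zero]; linarith) (by linarith) hsb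
  have hD : racahD2 0 b 0 0 n =
      (Real.Gamma (b + n + 1) / Real.Gamma (b - n)) ^ 2 / (2 * n + 1) := by
    rw [racahD2_alpha_beta_zero, zero_add, sub_zero, ← sq]
  rw [hW, hD, one_mul, div_div_eq_mul_div, mul_comm (2 * s + 1),
    Real.sqrt_div' _ (sq_nonneg _), Real.sqrt_sq (Gamma_add_add_one_div_Gamma_sub_pos hn).le]

theorem racahHat_zero_eq_mul_racahSum {b s : ℝ} {n : ℕ} (hn : n < b) (hs : -(1 / 2) ≤ s)
    (hsb : s < b) :
    racahHat 0 b 0 0 n s =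
      (-1) ^ n / b * √((2 * n + 1) * (2 * s + 1)) * racahSum 0 b 0 0 n s := by
  have hpole (m : ℕ) : b - n ≠ -m := by linarith [m.cast_nonneg (α := ℝ)]
  have hR : racahR 0 b 0 0 n s =
      (-1) ^ n / b * (Real.Gamma (b + n + 1) / Real.Gamma (b - n)) * racahSum 0 b 0 0 n s := by
    rw [racahR_beta_zero, zero_add, add_zero, zero_sub, neg_add_eq_sub,
      pochR_add_one_mul_pochR_one_sub hpole]
  have hG := Gamma_add_add_one_div_Gamma_sub_pos hn
  rw [racahHat, hR, sqrt_racahW_mul_div_racahD2_zero hn hs hsb]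
  generalize Real.Gamma (b + n + 1) / Real.Gamma (b - n) = G at hG
  field_simp

theorem racah_special_case_closed_form_general {b s : ℝ} {n : ℕ} (hn : n < b)
    (hs : -(1 / 2) ≤ s) (hsb : s < b) :
    racahHat 0 b 0 0 n s =
      (-1) ^ n / b * √((2 * n + 1) * (2 * s + 1)) *
        ∑ k ∈ range (n + 1),
          pochR (-n) k * pochR (-s) k * pochR (s + 1) k * pochR (n + 1) k /
            (pochR 1 k * pochR (b + 1) k * pochR (1 - b) k * k.factorial) := by
  simp only [racahHat_zero_eq_mul_racahSum hn hs hsb, racahSum, zero_add, add_zero, zero_sub,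
    neg_add_eq_sub]

theorem racah_special_case_closed_form
    (N : ℕ) (hN : 2 ≤ N) (n s : ℕ) (hn : n ≤ N - 1) (hs : s ≤ N - 1) :
    racahHat 0 (N : ℝ) 0 0 n (s : ℝ) =
      ((-1 : ℝ) ^ n / (N : ℝ)) * Real.sqrt ((2 * (n : ℝ) + 1) * (2 * (s : ℝ) + 1)) *
        ∑ k ∈ Finset.range (n + 1),
          pochR (-(n : ℝ)) k * pochR (-(s : ℝ)) k * pochR ((s : ℝ) + 1) k *
              pochR ((n : ℝ) + 1) k /
            (pochR 1 k * pochR ((N : ℝ) + 1) k * pochR (1 - (N : ℝ)) k *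
              (Nat.factorial k : ℝ)) := by
  exact racah_special_case_closed_form_general (mod_cast (by omega : n < N))
    (by linarith [s.cast_nonneg (α := ℝ)]) (mod_cast (by omega : s < N))
end
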